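/- Let N ≥ 1 and r, s, q ∈ ℂ with h = r + 4s + 2q(N−1) ≠ 0 and q(r + 8s + 2(N−2)q) ≠ 0, and let λ ∈ ℂ satisfy λ² = 2h³ / ( q(r + 8s + 2(N−2)q) ). Then the configuration BC_N⁺(r,s,q) together with λ satisfies the trigonometric WDVV equations. -/

import Mathlib

open scoped Classical
open Finset

noncomputable section

/-- Evaluation of a covector `α` on a vector `x` in `ℂ^N`. -/
def ev {N : ℕ} (α x : Fin N → ℂ) : ℂ := ∑ i, α i * x i

/-- The bilinear form `G_𝒜` associated to a configuration. -/
def Gform {N : ℕ} (A : Finset (Fin N → ℂ)) (c : (Fin N → ℂ) → ℂ)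
    (u v : Fin N → ℂ) : ℂ :=
  ∑ α ∈ A, c α * ev α u * ev α v

/-- `(α ∧ β)(a, b) = α(a)β(b) - α(b)β(a)`. -/
def wedge {N : ℕ} (α β a b : Fin N → ℂ) : ℂ :=
  ev α a * ev β b - ev α b * ev β a

/-- Non-degeneracy of `G_𝒜`. -/
def Nondeg {N : ℕ} (A : Finset (Fin N → ℂ)) (c : (Fin N → ℂ) → ℂ) : Prop :=
  ∀ u : Fin N → ℂ, (∀ v : Fin N → ℂ, Gform A c u v = 0) → u = 0

/-- `dual` assigns to each covector `γ ∈ 𝒜` its `G_𝒜`-dual vector `γ^∨`. -/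
def IsDual {N : ℕ} (A : Finset (Fin N → ℂ)) (c : (Fin N → ℂ) → ℂ)
    (dual : (Fin N → ℂ) → Fin N → ℂ) : Prop :=
  ∀ γ ∈ A, ∀ v : Fin N → ℂ, Gform A c (dual γ) v = ev γ v

/-- `γ` is proportional to `α`. -/
def Collin {N : ℕ} (α γ : Fin N → ℂ) : Prop := ∃ t : ℂ, γ = t • α

/-- `γ₁ ∼ γ₂` iff `γ₁ + γ₂` or `γ₁ - γ₂` is an integer multiple of `α`. -/
def SeriesRel {N : ℕ} (α γ₁ γ₂ : Fin N → ℂ) : Prop :=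
  ∃ m : ℤ, γ₁ + γ₂ = (m : ℂ) • α ∨ γ₁ - γ₂ = (m : ℂ) • α

/-- `Γ` is an (maximal) `α`-series of the configuration `A`. -/
def IsSeries {N : ℕ} (A : Finset (Fin N → ℂ)) (α : Fin N → ℂ)
    (Γ : Finset (Fin N → ℂ)) : Prop :=
  Γ.Nonempty ∧ (∀ γ ∈ Γ, γ ∈ A ∧ ¬ Collin α γ) ∧
    (∀ γ₁ ∈ Γ, ∀ γ₂ ∈ Γ, SeriesRel α γ₁ γ₂) ∧
    (∀ β ∈ A, ¬ Collin α β → (∃ γ ∈ Γ, SeriesRel α β γ) → β ∈ Γ)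

/-- The trigonometric ∨-conditions. -/
def IsTrigVSystem {N : ℕ} (A : Finset (Fin N → ℂ)) (c : (Fin N → ℂ) → ℂ)
    (dual : (Fin N → ℂ) → Fin N → ℂ) : Prop :=
  ∀ α ∈ A, ∀ Γ : Finset (Fin N → ℂ), IsSeries A α Γ →
    ∀ a b : Fin N → ℂ, ∑ β ∈ Γ, c β * ev α (dual β) * wedge α β a b = 0

/-- The form `G^{(1)}_𝒜` evaluated at `(u, v)`. -/
def G1form {N : ℕ} (A : Finset (Fin N → ℂ)) (c : (Fin N → ℂ) → ℂ)
    (u v : Fin N → ℂ) : ℂ :=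
  ∑ α ∈ A, ∑ β ∈ A, c α * c β * wedge α β u v ^ 2

/-- The form `G^{(2)}_𝒜` evaluated at `(u, v)`. -/
def G2form {N : ℕ} (A : Finset (Fin N → ℂ)) (c : (Fin N → ℂ) → ℂ)
    (dual : (Fin N → ℂ) → Fin N → ℂ) (u v : Fin N → ℂ) : ℂ :=
  ∑ α ∈ A, ∑ β ∈ A,
    c α * c β * Gform A c (dual α) (dual β) * wedge α β u v ^ 2

/-- Complex cotangent. -/
def ccot (z : ℂ) : ℂ := Complex.cos z / Complex.sin z

/-- The matrix `F_i(x)` of third derivatives of the prepotential, `1 ≤ i ≤ N`. -/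
def Fmat {N : ℕ} (A : Finset (Fin N → ℂ)) (c : (Fin N → ℂ) → ℂ) (lam : ℂ)
    (i : Fin N) (x : Fin N → ℂ) : Matrix (Fin N ⊕ Unit) (Fin N ⊕ Unit) ℂ :=
  Matrix.of fun p q =>
    match p, q with
    | Sum.inl p, Sum.inl q => lam * ∑ α ∈ A, c α * α i * α p * α q * ccot (ev α x)
    | Sum.inl p, Sum.inr _ => 2 * ∑ α ∈ A, c α * α i * α p
    | Sum.inr _, Sum.inl q => 2 * ∑ α ∈ A, c α * α i * α q
    | Sum.inr _, Sum.inr _ => 0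

/-- The constant matrix `F_{N+1}`. -/
def Flast {N : ℕ} (A : Finset (Fin N → ℂ)) (c : (Fin N → ℂ) → ℂ) :
    Matrix (Fin N ⊕ Unit) (Fin N ⊕ Unit) ℂ :=
  Matrix.of fun p q =>
    match p, q with
    | Sum.inl p, Sum.inl q => 2 * ∑ α ∈ A, c α * α p * α q
    | Sum.inr _, Sum.inr _ => 2
    | _, _ => 0

/-- `(𝒜, c, λ)` satisfies the trigonometric WDVV equations. -/
def SatisfiesWDVV {N : ℕ} (A : Finset (Fin N → ℂ)) (c : (Fin N → ℂ) → ℂ)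
    (lam : ℂ) : Prop :=
  IsUnit (Flast A c) ∧
    ∀ x : Fin N → ℂ, (∀ α ∈ A, Complex.sin (ev α x) ≠ 0) →
      ∀ i j : Fin N,
        Fmat A c lam i x * (Flast A c)⁻¹ * Fmat A c lam j x =
          Fmat A c lam j x * (Flast A c)⁻¹ * Fmat A c lam i x

/-- The covectors of `𝒜` lie in a lattice of full rank `N` in `(ℂ^N)^*`. -/
def InLattice {N : ℕ} (A : Finset (Fin N → ℂ)) : Prop :=
  ∃ L : Fin N → Fin N → ℂ, LinearIndependent ℂ L ∧
    ∀ α ∈ A, ∃ m : Fin N → ℤ, α = ∑ i, (m i : ℂ) • L i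

/-- No two covectors of `𝒜` are negatively proportional. -/
def PositiveSystem {N : ℕ} (A : Finset (Fin N → ℂ)) : Prop :=
  ∀ α ∈ A, ∀ t : ℝ, t < 0 → (t : ℂ) • α ∉ A

/-- The standard covector `e^i` of `(ℂ^N)^*`. -/
def esgl (N : ℕ) (i : Fin N) : Fin N → ℂ := Pi.single i 1

/-- The set of covectors of the configuration `BC_N⁺`:
`e^i`, `2e^i` (`1 ≤ i ≤ N`) and `e^i ± e^j` (`1 ≤ i < j ≤ N`). -/
def BCfin (N : ℕ) : Finset (Fin N → ℂ) :=
  (Finset.univ.image (fun i : Fin N => esgl N i)) ∪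
  (Finset.univ.image (fun i : Fin N => (2 : ℂ) • esgl N i)) ∪
  ((Finset.univ.filter (fun p : Fin N × Fin N => p.1 < p.2)).image
    (fun p => esgl N p.1 + esgl N p.2)) ∪
  ((Finset.univ.filter (fun p : Fin N × Fin N => p.1 < p.2)).image
    (fun p => esgl N p.1 - esgl N p.2))

theorem bc_pair_sum {N : ℕ} (g : Fin N → Fin N → ℂ) (hg : ∀ k, g k k = 0) :
    ∑ p ∈ Finset.univ.filter (fun p : Fin N × Fin N => p.1 < p.2), (g p.1 p.2 + g p.2 p.1)
      = ∑ k, ∑ l, g k l := by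
  rw [Finset.sum_filter, ← Finset.univ_product_univ, Finset.sum_product]
  have h1 : ∀ k l : Fin N, (if k < l then g k l + g l k else 0)
      = (if k < l then g k l else 0) + (if k < l then g l k else 0) := by
    intro k l; split_ifs <;> simp
  simp only [h1, Finset.sum_add_distrib]
  rw [Finset.sum_comm (f := fun k l : Fin N => if k < l then g l k else 0),
    ← Finset.sum_add_distrib]
  refine Finset.sum_congr rfl fun k _ => ?_
  rw [← Finset.sum_add_distrib]
  refine Finset.sum_congr rfl fun l _ => ?_
  rcases lt_trichotomy k l with h | h | h
  · simp [h, h.not_gt]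
  · subst h; simp [hg]
  · simp [h, h.not_gt]

theorem esgl_apply (N : ℕ) (i j : Fin N) : esgl N i j = if i = j then 1 else 0 := by
  simp [esgl, Pi.single_apply, eq_comm]

theorem bc_sum {N : ℕ} (f : (Fin N → ℂ) → ℂ) :
    ∑ α ∈ BCfin N, f α = ∑ i, f (esgl N i) + ∑ i, f ((2 : ℂ) • esgl N i)
      + ∑ p ∈ Finset.univ.filter (fun p : Fin N × Fin N => p.1 < p.2),
          (f (esgl N p.1 + esgl N p.2) + f (esgl N p.1 - esgl N p.2)) := by
  have hS : ∀ i : Fin N, ∑ m, esgl N i m = 1 := by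
    intro i; simp [esgl_apply]
  have key : ∀ i j k l : Fin N, i < j → k < l →
      (∀ m, esgl N i m + esgl N j m = esgl N k m + esgl N l m) → i = k ∧ j = l := by
    intro i j k l hij hkl h
    have hi := h i
    have hj := h j
    have hk := h k
    have hl := h l
    simp only [esgl_apply] at hi hj hk hl
    grind
  have key2 : ∀ i j k l : Fin N, i < j → k < l →
      (∀ m, esgl N i m - esgl N j m = esgl N k m - esgl N l m) → i = k ∧ j = l := by
    intro i j k l hij hkl h
    have hi := h i
    have hj := h j
    have hk := h k
    have hl := h l
    simp only [esgl_apply] at hi hj hk hl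
    grind
  unfold BCfin
  rw [Finset.sum_union, Finset.sum_union, Finset.sum_union, Finset.sum_image, Finset.sum_image,
    Finset.sum_image, Finset.sum_image, Finset.sum_add_distrib]
  · ring
  · rintro ⟨i, j⟩ h1 ⟨k, l⟩ h2 h
    simp only [Finset.coe_filter, Finset.mem_univ, true_and, Set.mem_ofPred_eq] at h1 h2
    have := key2 i j k l h1 h2 (fun m => by simpa using congrFun h m)
    simp [this]
  · rintro ⟨i, j⟩ h1 ⟨k, l⟩ h2 h
    simp only [Finset.coe_filter, Finset.mem_univ, true_and, Set.mem_ofPred_eq] at h1 h2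
    have := key i j k l h1 h2 (fun m => by simpa using congrFun h m)
    simp [this]
  · intro i _ j _ h
    have := congrFun h i
    simp [esgl_apply] at this
    exact this.symm
  · intro i _ j _ h
    have := congrFun h i
    simp [esgl_apply] at this
    exact this.symm
  · rw [Finset.disjoint_left]
    simp only [Finset.mem_image, Finset.mem_univ, true_and, not_exists]
    rintro _ ⟨i, rfl⟩ j h
    have := congrFun h j
    simp [esgl_apply] at this
    split_ifs at this <;> norm_num at this
  · rw [Finset.disjoint_left]
    simp only [Finset.mem_image, Finset.mem_univ, true_and, not_exists, Finset.mem_union,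
      Finset.mem_filter]
    rintro _ (⟨i, rfl⟩ | ⟨i, rfl⟩) ⟨k, l⟩ ⟨hkl, h⟩
    · have := congrArg (fun v : Fin N → ℂ => ∑ m, v m) h
      simp [Finset.sum_add_distrib, hS] at this
    · have := congrFun h k
      simp only at hkl
      simp [esgl_apply, hkl.ne'] at this
      split_ifs at this <;> norm_num at this
  · rw [Finset.disjoint_left]
    simp only [Finset.mem_image, Finset.mem_univ, true_and, not_exists, Finset.mem_union,
      Finset.mem_filter]
    rintro _ ((⟨i, rfl⟩ | ⟨i, rfl⟩) | ⟨⟨i, j⟩, hij, rfl⟩) ⟨k, l⟩ ⟨hkl, h⟩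
    · have := congrArg (fun v : Fin N → ℂ => ∑ m, v m) h
      simp [Finset.sum_sub_distrib, hS] at this
    · have := congrArg (fun v : Fin N → ℂ => ∑ m, v m) h
      simp [Finset.sum_sub_distrib, ← Finset.mul_sum, hS] at this
    · have := congrArg (fun v : Fin N → ℂ => ∑ m, v m) h
      simp [Finset.sum_sub_distrib, Finset.sum_add_distrib, hS] at this
      norm_num at this

theorem ev_esgl {N : ℕ} (x : Fin N → ℂ) (i : Fin N) : ev (esgl N i) x = x i := by
  simp [ev, esgl_apply]

theorem ev_two {N : ℕ} (x : Fin N → ℂ) (i : Fin N) : ev ((2 : ℂ) • esgl N i) x = 2 * x i := by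
  simp [ev, esgl_apply]

theorem ev_add' {N : ℕ} (x : Fin N → ℂ) (i j : Fin N) :
    ev (esgl N i + esgl N j) x = x i + x j := by
  simp [ev, esgl_apply, add_mul, Finset.sum_add_distrib]

theorem ev_sub' {N : ℕ} (x : Fin N → ℂ) (i j : Fin N) :
    ev (esgl N i - esgl N j) x = x i - x j := by
  simp [ev, esgl_apply, sub_mul, Finset.sum_sub_distrib]

theorem bc_gram {N : ℕ} (r s q : ℂ) (c : (Fin N → ℂ) → ℂ)
    (hc1 : ∀ i : Fin N, c (esgl N i) = r)
    (hc2 : ∀ i : Fin N, c ((2 : ℂ) • esgl N i) = s)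
    (hc3 : ∀ i j : Fin N, i < j →
      c (esgl N i + esgl N j) = q ∧ c (esgl N i - esgl N j) = q) (a b : Fin N) :
    ∑ α ∈ BCfin N, c α * α a * α b
      = if a = b then r + 4 * s + 2 * q * ((N : ℂ) - 1) else 0 := by
  rw [bc_sum]
  have h3 : ∑ p ∈ Finset.univ.filter (fun p : Fin N × Fin N => p.1 < p.2),
      (c (esgl N p.1 + esgl N p.2) * (esgl N p.1 + esgl N p.2) a * (esgl N p.1 + esgl N p.2) b
      + c (esgl N p.1 - esgl N p.2) * (esgl N p.1 - esgl N p.2) a * (esgl N p.1 - esgl N p.2) b)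
      = ∑ k, ∑ l, (2 * q * esgl N k a * esgl N k b * (1 - if k = l then 1 else 0)) := by
    rw [← bc_pair_sum _ (by simp)]
    refine Finset.sum_congr rfl ?_
    rintro ⟨k, l⟩ h
    simp only [Finset.mem_filter, Finset.mem_univ, true_and] at h
    simp only [(hc3 k l h).1, (hc3 k l h).2, Pi.add_apply, Pi.sub_apply, h.ne, h.ne', if_false]
    ring
  rw [h3]
  simp only [hc1, hc2, ← Finset.mul_sum, Finset.sum_sub_distrib, Pi.smul_apply, smul_eq_mul,
    esgl_apply]
  by_cases hab : a = b
  · subst hab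
    simp
    ring
  · have : ∀ k : Fin N, ((if k = a then (1:ℂ) else 0) = 0) ∨ ((if k = b then (1:ℂ) else 0) = 0) := by
      intro k; grind
    simp [hab, Ne.symm hab]

/-- Off-diagonal coefficients. -/
def bcB {N : ℕ} (x : Fin N → ℂ) (i j : Fin N) : ℂ :=
  2 * Complex.sin (2 * x j) / (Complex.cos (2 * x i) - Complex.cos (2 * x j))

theorem bcB_self {N : ℕ} (x : Fin N → ℂ) (i : Fin N) : bcB x i i = 0 := by simp [bcB]

/-- Diagonal coefficients. -/
def bcA {N : ℕ} (r s q : ℂ) (x : Fin N → ℂ) (i : Fin N) : ℂ :=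
  (r * (1 + Complex.cos (2 * x i)) + 8 * s * Complex.cos (2 * x i)) / Complex.sin (2 * x i)
    + q * ∑ k, bcB x k i

theorem bc_cos_diff (u v : ℂ) : Complex.cos (2 * u) - Complex.cos (2 * v)
    = - (2 * (Complex.sin (u + v) * Complex.sin (u - v))) := by
  rw [Complex.sin_add, Complex.sin_sub, Complex.cos_two_mul, Complex.cos_two_mul]
  linear_combination (2 * (Complex.cos v) ^ 2) * Complex.sin_sq_add_cos_sq u
    - (2 * Complex.cos u ^ 2) * Complex.sin_sq_add_cos_sq v

theorem bc_cot_sub (u v : ℂ) (h1 : Complex.sin (u + v) ≠ 0) (h2 : Complex.sin (u - v) ≠ 0) :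
    ccot (u + v) - ccot (u - v)
      = 2 * Complex.sin (2 * v) / (Complex.cos (2 * u) - Complex.cos (2 * v)) := by
  have e : Complex.sin (2 * v) = Complex.sin (u + v) * Complex.cos (u - v)
      - Complex.cos (u + v) * Complex.sin (u - v) := by
    rw [← Complex.sin_sub]; congr 1; ring
  rw [bc_cos_diff, e]
  unfold ccot
  field_simp
  ring

theorem bc_cot_add (u v : ℂ) (h1 : Complex.sin (u + v) ≠ 0) (h2 : Complex.sin (u - v) ≠ 0) :
    ccot (u + v) + ccot (u - v)
      = 2 * Complex.sin (2 * u) / (Complex.cos (2 * v) - Complex.cos (2 * u)) := by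
  have e : Complex.sin (2 * u) = Complex.sin (u + v) * Complex.cos (u - v)
      + Complex.cos (u + v) * Complex.sin (u - v) := by
    rw [← Complex.sin_add]; congr 1; ring
  have e2 := bc_cos_diff u v
  have e3 : Complex.cos (2 * v) - Complex.cos (2 * u)
      = 2 * (Complex.sin (u + v) * Complex.sin (u - v)) := by linear_combination -e2
  rw [e3, e]
  unfold ccot
  field_simp
  ring

/-- The Kronecker delta. -/
def dl {N : ℕ} (i j : Fin N) : ℂ := if i = j then 1 else 0

theorem bc_tensor {N : ℕ} (r s q : ℂ) (c : (Fin N → ℂ) → ℂ)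
    (hc1 : ∀ i : Fin N, c (esgl N i) = r)
    (hc2 : ∀ i : Fin N, c ((2 : ℂ) • esgl N i) = s)
    (hc3 : ∀ i j : Fin N, i < j →
      c (esgl N i + esgl N j) = q ∧ c (esgl N i - esgl N j) = q)
    (x : Fin N → ℂ) (hx : ∀ α ∈ BCfin N, Complex.sin (ev α x) ≠ 0) (i a b : Fin N) :
    ∑ α ∈ BCfin N, c α * α i * α a * α b * ccot (ev α x)
      = dl i a * dl i b * bcA r s q x i
        + q * (dl i a * bcB x i b + dl i b * bcB x i a + dl a b * bcB x a i) := by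
  have hx1 : ∀ i, Complex.sin (x i) ≠ 0 := fun i => by
    rw [← ev_esgl x i]; apply hx; simp [BCfin]
  have hx2 : ∀ i, Complex.sin (2 * x i) ≠ 0 := fun i => by
    rw [← ev_two x i]; apply hx; simp [BCfin]
  have hx3 : ∀ i j, i < j → Complex.sin (x i + x j) ≠ 0 := fun i j h => by
    rw [← ev_add' x i j]; apply hx
    simp only [BCfin, Finset.mem_union, Finset.mem_image]
    exact Or.inl (Or.inr ⟨(i, j), by simpa using h, rfl⟩)
  have hx4 : ∀ i j, i < j → Complex.sin (x i - x j) ≠ 0 := fun i j h => by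
    rw [← ev_sub' x i j]; apply hx
    simp only [BCfin, Finset.mem_union, Finset.mem_image]
    exact Or.inr ⟨(i, j), by simpa using h, rfl⟩
  rw [bc_sum]
  have h3 : ∑ p ∈ Finset.univ.filter (fun p : Fin N × Fin N => p.1 < p.2),
      (c (esgl N p.1 + esgl N p.2) * (esgl N p.1 + esgl N p.2) i * (esgl N p.1 + esgl N p.2) a
          * (esgl N p.1 + esgl N p.2) b * ccot (ev (esgl N p.1 + esgl N p.2) x)
      + c (esgl N p.1 - esgl N p.2) * (esgl N p.1 - esgl N p.2) i * (esgl N p.1 - esgl N p.2) a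
          * (esgl N p.1 - esgl N p.2) b * ccot (ev (esgl N p.1 - esgl N p.2) x))
      = ∑ k, ∑ l, (q * (dl k i * dl k a * dl k b * bcB x l k
          + (dl k i * dl k a * dl l b + dl k i * dl l a * dl k b + dl l i * dl k a * dl k b)
            * bcB x k l)) := by
    rw [← bc_pair_sum _ (by simp [bcB_self])]
    refine Finset.sum_congr rfl ?_
    rintro ⟨k, l⟩ h
    simp only [Finset.mem_filter, Finset.mem_univ, true_and] at h
    have e1 : bcB x k l = ccot (x k + x l) - ccot (x k - x l) :=
      (bc_cot_sub _ _ (hx3 k l h) (hx4 k l h)).symm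
    have e2 : bcB x l k = ccot (x k + x l) + ccot (x k - x l) :=
      (bc_cot_add _ _ (hx3 k l h) (hx4 k l h)).symm
    simp only [(hc3 k l h).1, (hc3 k l h).2, Pi.add_apply, Pi.sub_apply, e1, e2, esgl_apply,
      ev_add', ev_sub', dl]
    ring
  rw [h3]
  have h1 : ∀ k, ccot (x k) * r + 8 * s * ccot (2 * x k)
      = (r * (1 + Complex.cos (2 * x k)) + 8 * s * Complex.cos (2 * x k))
        / Complex.sin (2 * x k) := by
    intro k
    have := hx2 k
    have h5 := hx1 k
    have hcs : Complex.cos (x k) ≠ 0 := by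
      intro h; apply this; rw [Complex.sin_two_mul, h]; simp
    have : ccot (x k) = (1 + Complex.cos (2 * x k)) / Complex.sin (2 * x k) := by
      rw [Complex.sin_two_mul, Complex.cos_two_mul]
      unfold ccot
      field_simp
      ring
    rw [this]
    unfold ccot
    ring
  simp only [hc1, hc2, ev_esgl, ev_two, Pi.smul_apply, smul_eq_mul]
  have h4 : bcA r s q x i = ccot (x i) * r + 8 * s * ccot (2 * x i) + q * ∑ k, bcB x k i := by
    rw [h1]; rfl
  rw [h4]
  simp only [esgl_apply, dl, mul_add, add_mul, Finset.sum_add_distrib, Finset.mul_sum]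
  simp only [mul_ite, ite_mul, mul_one, mul_zero, zero_mul, one_mul, Finset.sum_ite_eq,
    Finset.sum_ite_eq', Finset.mem_univ, if_true, Finset.sum_ite_irrel, Finset.sum_const_zero]
  by_cases hia : i = a
  · subst hia
    by_cases hib : i = b
    · subst hib
      simp [bcB_self]
      ring
    · have hbi : ¬ b = i := fun h => hib h.symm
      simp [hib, hbi]
  · have hai : ¬ a = i := fun h => hia h.symm
    by_cases hib : i = b
    · subst hib
      simp [hia, hai]
    · have hbi : ¬ b = i := fun h => hib h.symm
      by_cases hab : a = b
      · subst hab
        simp [hia, hai]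
      · have hba : ¬ b = a := fun h => hab h.symm
        simp [hia, hai, hib, hbi, hab, hba]

theorem bc_three {N : ℕ} (x : Fin N → ℂ)
    (hC : ∀ i j : Fin N, i ≠ j → Complex.cos (2 * x i) - Complex.cos (2 * x j) ≠ 0)
    (i j k : Fin N) (hij : i ≠ j) (hik : i ≠ k) (hjk : j ≠ k) :
    bcB x i k * bcB x k j + bcB x i j * bcB x j k - bcB x i j * bcB x i k = 0 := by
  have h1 := hC i j hij
  have h2 := hC i k hik
  have h3 := hC j k hjk
  have h4 := hC k j hjk.symm
  unfold bcB
  field_simp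
  ring

theorem bc_main {N : ℕ} (r s q : ℂ) (x : Fin N → ℂ)
    (hS : ∀ i : Fin N, Complex.sin (2 * x i) ≠ 0)
    (hC : ∀ i j : Fin N, i ≠ j → Complex.cos (2 * x i) - Complex.cos (2 * x j) ≠ 0)
    (i j : Fin N) (hij : i ≠ j) :
    bcA r s q x i * bcB x j i + bcA r s q x j * bcB x i j + q * ∑ k, bcB x i k * bcB x j k
      - q * bcB x i j ^ 2 - q * bcB x j i ^ 2
      = - 2 * (r + 8 * s + 2 * ((N : ℂ) - 2) * q) := by
  have hsum : ∑ k, (bcB x k i * bcB x j i + bcB x k j * bcB x i j + bcB x i k * bcB x j k)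
      = bcB x i j ^ 2 + bcB x j i ^ 2 - 4 * ((N : ℂ) - 2) := by
    have hk : ∀ k : Fin N,
        bcB x k i * bcB x j i + bcB x k j * bcB x i j + bcB x i k * bcB x j k
        = -4 + (if k = i then bcB x i j ^ 2 + 4 else 0)
          + (if k = j then bcB x j i ^ 2 + 4 else 0) := by
      intro k
      by_cases hki : k = i
      · subst hki
        simp [hij, bcB_self]
        ring
      by_cases hkj : k = j
      · subst hkj
        simp [hki, bcB_self]
        ring
      simp only [hki, hkj, if_false]
      have h1 := hC i j hij
      have h1' := hC j i hij.symm
      have h2 := hC k i hki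
      have h2' := hC i k (Ne.symm hki)
      have h3 := hC k j hkj
      have h3' := hC j k (Ne.symm hkj)
      have s1 : Complex.sin (2 * x i) ^ 2 = 1 - Complex.cos (2 * x i) ^ 2 := Complex.sin_sq _
      have s2 : Complex.sin (2 * x j) ^ 2 = 1 - Complex.cos (2 * x j) ^ 2 := Complex.sin_sq _
      have s3 : Complex.sin (2 * x k) ^ 2 = 1 - Complex.cos (2 * x k) ^ 2 := Complex.sin_sq _
      unfold bcB
      generalize Complex.sin (2 * x i) = Si at *
      generalize Complex.sin (2 * x j) = Sj at *
      generalize Complex.sin (2 * x k) = Sk at *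
      generalize Complex.cos (2 * x i) = Ci at *
      generalize Complex.cos (2 * x j) = Cj at *
      generalize Complex.cos (2 * x k) = Ck at *
      have e1 : 2 * Si / (Ck - Ci) * (2 * Si / (Cj - Ci))
          = 4 * (1 - Ci ^ 2) / ((Ck - Ci) * (Cj - Ci)) := by
        rw [← s1]; field_simp; ring
      have e2 : 2 * Sj / (Ck - Cj) * (2 * Sj / (Ci - Cj))
          = 4 * (1 - Cj ^ 2) / ((Ck - Cj) * (Ci - Cj)) := by
        rw [← s2]; field_simp; ring
      have e3 : 2 * Sk / (Ci - Ck) * (2 * Sk / (Cj - Ck))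
          = 4 * (1 - Ck ^ 2) / ((Ci - Ck) * (Cj - Ck)) := by
        rw [← s3]; field_simp; ring
      rw [e1, e2, e3]
      field_simp
      ring
    simp only [hk, Finset.sum_add_distrib]
    simp
    ring
  simp only [Finset.sum_add_distrib, ← Finset.sum_mul] at hsum
  have hr : (r * (1 + Complex.cos (2 * x i)) + 8 * s * Complex.cos (2 * x i))
        / Complex.sin (2 * x i) * bcB x j i
      + (r * (1 + Complex.cos (2 * x j)) + 8 * s * Complex.cos (2 * x j))
        / Complex.sin (2 * x j) * bcB x i j = -2 * (r + 8 * s) := by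
    have h1 := hC i j hij
    have h1' := hC j i hij.symm
    have h2 := hS i
    have h3 := hS j
    unfold bcB
    field_simp
    ring
  unfold bcA
  linear_combination hr + q * hsum

/-- The closed form of the tensor of third derivatives. -/
def bcT {N : ℕ} (r s q : ℂ) (x : Fin N → ℂ) (i a b : Fin N) : ℂ :=
  dl i a * dl i b * bcA r s q x i
        + q * (dl i a * bcB x i b + dl i b * bcB x i a + dl a b * bcB x a i)

theorem bc_prod {N : ℕ} (r s q : ℂ) (x : Fin N → ℂ) (i j a b : Fin N) :
    ∑ m, bcT r s q x i a m * bcT r s q x j m b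
      = dl i a * bcA r s q x i * bcT r s q x j i b
        + q * dl i a * (bcB x i j * (dl j b * bcA r s q x j) + q * bcB x i j * bcB x j b
            + q * dl j b * ∑ m, bcB x i m * bcB x j m + q * bcB x i b * bcB x b j)
        + q * bcB x i a * bcT r s q x j i b + q * bcB x a i * bcT r s q x j a b := by
  have h : ∀ m, bcT r s q x i a m * bcT r s q x j m b
      = dl i m * (dl i a * bcA r s q x i * bcT r s q x j m b)
      + dl j m * (q * dl i a * (bcB x i m * (dl j b * bcA r s q x j) + q * bcB x i m * bcB x j b))
      + q * dl i a * (q * dl j b) * (bcB x i m * bcB x j m)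
      + dl m b * (q * dl i a * (q * bcB x i m * bcB x m j))
      + dl i m * (q * bcB x i a * bcT r s q x j m b)
      + dl a m * (q * bcB x a i * bcT r s q x j m b) := by
    intro m
    simp only [bcT]
    ring
  simp only [h, Finset.sum_add_distrib, ← Finset.mul_sum]
  have d1 : ∀ (k : Fin N) (f : Fin N → ℂ), ∑ m, dl k m * f m = f k := by
    intro k f; simp [dl]
  have d2 : ∀ (k : Fin N) (f : Fin N → ℂ), ∑ m, dl m k * f m = f k := by
    intro k f; simp [dl]
  rw [d1 i (fun m => dl i a * bcA r s q x i * bcT r s q x j m b),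
    d1 j (fun m => q * dl i a * (bcB x i m * (dl j b * bcA r s q x j) + q * bcB x i m * bcB x j b)),
    d2 b (fun m => q * dl i a * (q * bcB x i m * bcB x m j)),
    d1 i (fun m => q * bcB x i a * bcT r s q x j m b),
    d1 a (fun m => q * bcB x a i * bcT r s q x j m b)]
  ring

theorem bc_comm {N : ℕ} (r s q : ℂ) (x : Fin N → ℂ)
    (hS : ∀ i : Fin N, Complex.sin (2 * x i) ≠ 0)
    (hC : ∀ i j : Fin N, i ≠ j → Complex.cos (2 * x i) - Complex.cos (2 * x j) ≠ 0)
    (i j a b : Fin N) :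
    ∑ m, bcT r s q x i a m * bcT r s q x j m b - ∑ m, bcT r s q x j a m * bcT r s q x i m b
      = - 2 * (q * (r + 8 * s + 2 * ((N : ℂ) - 2) * q)) * (dl i a * dl j b - dl j a * dl i b) := by
  by_cases hij : i = j
  · subst hij; ring
  have hji : ¬ j = i := fun h => hij h.symm
  have hm := bc_main r s q x hS hC i j hij
  have hsw : ∑ m, bcB x j m * bcB x i m = ∑ m, bcB x i m * bcB x j m :=
    Finset.sum_congr rfl fun m _ => mul_comm _ _
  rw [bc_prod, bc_prod, hsw]
  generalize ∑ m, bcB x i m * bcB x j m = sg at *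
  by_cases hia : i = a
  · subst hia
    by_cases hib : i = b
    · subst hib
      simp [bcT, dl, hij, hji, bcB_self]
      ring
    have hbi : ¬ b = i := fun h => hib h.symm
    by_cases hjb : j = b
    · subst hjb
      simp [bcT, dl, hij, hji, bcB_self]
      linear_combination q * hm
    have hbj : ¬ b = j := fun h => hjb h.symm
    have h3 := bc_three x hC i j b hij hib hjb
    simp [bcT, dl, hij, hji, hib, hbi, hjb, hbj, bcB_self]
    linear_combination q ^ 2 * h3
  have hai : ¬ a = i := fun h => hia h.symm
  by_cases hja : j = a
  · subst hja
    by_cases hib : i = b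
    · subst hib
      simp [bcT, dl, hij, hji, bcB_self]
      linear_combination (-q) * hm
    have hbi : ¬ b = i := fun h => hib h.symm
    by_cases hjb : j = b
    · subst hjb
      simp [bcT, dl, hij, hji, bcB_self]
      ring
    have hbj : ¬ b = j := fun h => hjb h.symm
    have h3 := bc_three x hC j i b hji hjb hib
    simp [bcT, dl, hij, hji, hib, hbi, hjb, hbj, bcB_self]
    linear_combination (-q ^ 2) * h3
  have haj : ¬ a = j := fun h => hja h.symm
  by_cases hib : i = b
  · subst hib
    have h3 := bc_three x hC i j a hij hia hja
    simp [bcT, dl, hij, hji, hia, hai, hja, haj, bcB_self]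
    linear_combination (-q ^ 2) * h3
  have hbi : ¬ b = i := fun h => hib h.symm
  by_cases hjb : j = b
  · subst hjb
    have h3 := bc_three x hC j i a hji hja hia
    simp [bcT, dl, hij, hji, hia, hai, hja, haj, bcB_self]
    linear_combination (q ^ 2) * h3
  have hbj : ¬ b = j := fun h => hjb h.symm
  by_cases hab : a = b
  · subst hab
    simp [bcT, dl, hij, hji, hia, hai, hja, haj]
    ring
  · simp [bcT, dl, hij, hji, hia, hja, hib, hjb, hab]

/-- the configuration `BC_N⁺(r,s,q)` with
`λ² = 2h³/(q(r + 8s + 2(N-2)q))`, `h = r + 4s + 2q(N-1)`, satisfies the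
trigonometric WDVV equations. -/
theorem BC_satisfies_WDVV (N : ℕ) (hN : 1 ≤ N) (r s q lam : ℂ)
    (hh : r + 4 * s + 2 * q * ((N : ℂ) - 1) ≠ 0)
    (hq : q * (r + 8 * s + 2 * ((N : ℂ) - 2) * q) ≠ 0)
    (hlam : lam ^ 2 = 2 * (r + 4 * s + 2 * q * ((N : ℂ) - 1)) ^ 3 /
      (q * (r + 8 * s + 2 * ((N : ℂ) - 2) * q)))
    (c : (Fin N → ℂ) → ℂ)
    (hc1 : ∀ i : Fin N, c (esgl N i) = r)
    (hc2 : ∀ i : Fin N, c ((2 : ℂ) • esgl N i) = s)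
    (hc3 : ∀ i j : Fin N, i < j →
      c (esgl N i + esgl N j) = q ∧ c (esgl N i - esgl N j) = q) :
    SatisfiesWDVV (BCfin N) c lam := by
  set h := r + 4 * s + 2 * q * ((N : ℂ) - 1) with hdef
  set K := r + 8 * s + 2 * ((N : ℂ) - 2) * q with hK
  have hG : ∀ a b : Fin N, ∑ α ∈ BCfin N, c α * α a * α b = h * dl a b := by
    intro a b
    rw [bc_gram r s q c hc1 hc2 hc3 a b]
    simp [dl, hdef]
  let D : Fin N ⊕ Unit → ℂ := Sum.elim (fun _ => 2 * h) (fun _ => 2)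
  let D' : Fin N ⊕ Unit → ℂ := Sum.elim (fun _ => (2 * h)⁻¹) (fun _ => 2⁻¹)
  have hF : Flast (BCfin N) c = Matrix.diagonal D := by
    ext a b
    rcases a with a | a <;> rcases b with b | b
    · simp only [Flast, Matrix.of_apply, hG, Matrix.diagonal_apply, dl, D]
      simp
    · simp [Flast]
    · simp [Flast]
    · simp [Flast, D]
  have hDD : Matrix.diagonal D * Matrix.diagonal D' = 1 := by
    rw [Matrix.diagonal_mul_diagonal, ← Matrix.diagonal_one]
    congr 1
    ext a
    rcases a with a | a
    · simp only [D, D', Sum.elim_inl]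
      exact mul_inv_cancel₀ (mul_ne_zero two_ne_zero hh)
    · simp [D, D']
  have hinv : (Flast (BCfin N) c)⁻¹ = Matrix.diagonal D' := by
    rw [hF]; exact Matrix.inv_eq_right_inv hDD
  refine ⟨?_, ?_⟩
  · rw [hF]
    exact IsUnit.of_mul_eq_one _ hDD
  intro x hx i j
  have hx2 : ∀ i, Complex.sin (2 * x i) ≠ 0 := fun i => by
    rw [← ev_two x i]; apply hx; simp [BCfin]
  have hC0 : ∀ i j, i < j → Complex.cos (2 * x i) - Complex.cos (2 * x j) ≠ 0 := fun i j hij => by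
    rw [bc_cos_diff]
    refine neg_ne_zero.mpr (mul_ne_zero two_ne_zero (mul_ne_zero ?_ ?_))
    · rw [← ev_add' x i j]; apply hx
      simp only [BCfin, Finset.mem_union, Finset.mem_image]
      exact Or.inl (Or.inr ⟨(i, j), by simpa using hij, rfl⟩)
    · rw [← ev_sub' x i j]; apply hx
      simp only [BCfin, Finset.mem_union, Finset.mem_image]
      exact Or.inr ⟨(i, j), by simpa using hij, rfl⟩
  have hC : ∀ i j, i ≠ j → Complex.cos (2 * x i) - Complex.cos (2 * x j) ≠ 0 := by
    intro i j hij
    rcases lt_or_gt_of_ne hij with hl | hl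
    · exact hC0 i j hl
    · rw [← neg_sub]; exact neg_ne_zero.mpr (hC0 j i hl)
  have hT : ∀ i a b, ∑ α ∈ BCfin N, c α * α i * α a * α b * ccot (ev α x) = bcT r s q x i a b :=
    bc_tensor r s q c hc1 hc2 hc3 x hx
  have f11 : ∀ i a b, Fmat (BCfin N) c lam i x (Sum.inl a) (Sum.inl b)
      = lam * bcT r s q x i a b := by
    intro i a b; simp only [Fmat, Matrix.of_apply, hT]
  have f12 : ∀ i a b, Fmat (BCfin N) c lam i x (Sum.inl a) (Sum.inr b) = 2 * (h * dl i a) := by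
    intro i a b; simp only [Fmat, Matrix.of_apply, hG]
  have f21 : ∀ i a b, Fmat (BCfin N) c lam i x (Sum.inr b) (Sum.inl a) = 2 * (h * dl i a) := by
    intro i a b; simp only [Fmat, Matrix.of_apply, hG]
  have f22 : ∀ i a b, Fmat (BCfin N) c lam i x (Sum.inr b) (Sum.inr a) = 0 := by
    intro i a b; simp only [Fmat, Matrix.of_apply]
  have d1 : ∀ (k : Fin N) (f : Fin N → ℂ), ∑ m, f m * dl k m = f k := by
    intro k f; simp [dl]
  have d2 : ∀ (k : Fin N) (f : Fin N → ℂ), ∑ m, dl k m * f m = f k := by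
    intro k f; simp [dl]
  have dls : ∀ k l : Fin N, dl k l = dl l k := by
    intro k l; simp [dl, eq_comm]
  have hprod : ∀ i j a b, (Fmat (BCfin N) c lam i x * (Flast (BCfin N) c)⁻¹
        * Fmat (BCfin N) c lam j x) a b
      = (2 * h)⁻¹ * ∑ m, Fmat (BCfin N) c lam i x a (Sum.inl m)
            * Fmat (BCfin N) c lam j x (Sum.inl m) b
        + 2⁻¹ * (Fmat (BCfin N) c lam i x a (Sum.inr ())
            * Fmat (BCfin N) c lam j x (Sum.inr ()) b) := by
    intro i j a b
    rw [hinv, Matrix.mul_apply]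
    simp only [Matrix.mul_diagonal, Fintype.sum_sum_type, D', Sum.elim_inl, Sum.elim_inr,
      Finset.mul_sum]
    congr 1
    · exact Finset.sum_congr rfl fun m _ => by ring
    · simp; ring
  ext a b
  rw [hprod, hprod]
  rcases a with a | a <;> rcases b with b | b
  · simp only [f11, f12, f21]
    have e : ∀ i j, ∑ m, lam * bcT r s q x i a m * (lam * bcT r s q x j m b)
        = lam ^ 2 * ∑ m, bcT r s q x i a m * bcT r s q x j m b := by
      intro i j
      rw [Finset.mul_sum]
      exact Finset.sum_congr rfl fun m _ => by ring
    rw [e, e]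
    have hcm := bc_comm r s q x hx2 hC i j a b
    rw [← hK] at hcm
    have hl : (2 * h)⁻¹ * lam ^ 2 * (q * K) = h ^ 2 := by
      rw [mul_assoc, hlam, div_mul_cancel₀ _ hq]; field_simp
    linear_combination (2 * h)⁻¹ * lam ^ 2 * hcm - 2 * (dl i a * dl j b - dl j a * dl i b) * hl
  · simp only [f11, f12, f22]
    have e : ∀ i j, ∑ m, lam * bcT r s q x i a m * (2 * (h * dl j m))
        = 2 * h * lam * bcT r s q x i a j := by
      intro i j
      rw [← d1 j (fun m => 2 * h * lam * bcT r s q x i a m)]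
      exact Finset.sum_congr rfl fun m _ => by ring
    rw [e, e]
    have : bcT r s q x i a j = bcT r s q x j a i := by
      by_cases hij : i = j
      · rw [hij]
      · simp only [bcT, dls a, dls j i]
        simp [dl, hij]
        grind
    rw [this]
    ring
  · simp only [f11, f21, f22]
    have e : ∀ i j, ∑ m, 2 * (h * dl i m) * (lam * bcT r s q x j m b)
        = 2 * h * lam * bcT r s q x j i b := by
      intro i j
      rw [← d2 i (fun m => 2 * h * lam * bcT r s q x j m b)]
      exact Finset.sum_congr rfl fun m _ => by ring
    rw [e, e]
    have : bcT r s q x i j b = bcT r s q x j i b := by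
      by_cases hij : i = j
      · rw [hij]
      · simp only [bcT, dls j i]
        simp [dl, hij]
        grind
    rw [this]
    ring
  · simp only [f12, f21, f22]
    congr 2
    exact Finset.sum_congr rfl fun m _ => by ring

end
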